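/- Let γ_1 be a nonzero real number and r a real number, and consider the 3-point DRP scheme with S(φ) = γ_1 sin(φ), whose numerical group velocity is V_g(φ) = −2 γ_1 cos(φ) / (1 + 4 r² γ_1² sin²(φ)). Then for every real φ, the derivative dV_g/dφ(φ) = 0 if and only if sin(φ) = 0. In particular the 3-point DRP scheme admits spurious caustics, at the reduced wavenumbers φ_c ∈ πℤ. -/

import Mathlib

/-!
By the quotient rule, the caustic equation `V_g' = 0` for a scheme with symbol `S` reads
`S'' (1 + 4 r² S²) = 8 r² S S'²`. Where `S'' = -k S` with `k > 0`, it becomes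
`S (k (1 + 4 r² S²) + 8 r² S'²) = 0`, whose second factor is positive. The 3-point symbol
`S = γ₁ sin` is the case `k = 1`.
-/

open Real

/-- The numerical group velocity `V_g = -2 S' / (1 + 4 r² S²)` of a finite difference scheme with
symbol `S`, as a function of the reduced wavenumber, where `r = τ / h` is the ratio of the time step
to the mesh size. -/
noncomputable def groupVelocity (r : ℝ) (S : ℝ → ℝ) (φ : ℝ) : ℝ :=
  -2 * deriv S φ / (1 + 4 * r ^ 2 * S φ ^ 2)

section

variable {r φ : ℝ} {S : ℝ → ℝ}

theorem hasDerivAt_groupVelocity {S'' : ℝ} (hS : DifferentiableAt ℝ S φ)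
    (hS' : HasDerivAt (deriv S) S'' φ) :
    HasDerivAt (groupVelocity r S)
      (-2 * (S'' * (1 + 4 * r ^ 2 * S φ ^ 2) - 8 * r ^ 2 * S φ * deriv S φ ^ 2) /
        (1 + 4 * r ^ 2 * S φ ^ 2) ^ 2) φ := by
  have hden : HasDerivAt (fun x ↦ 1 + 4 * r ^ 2 * S x ^ 2)
      (4 * r ^ 2 * (2 * S φ * deriv S φ)) φ := by
    simpa using ((hS.hasDerivAt.fun_pow 2).const_mul (4 * r ^ 2)).const_add 1
  have hden_ne : 1 + 4 * r ^ 2 * S φ ^ 2 ≠ 0 := by positivity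
  exact ((hS'.const_mul (-2)).fun_div hden hden_ne).congr_deriv (by ring)

theorem deriv_groupVelocity_eq_zero_iff {S'' : ℝ} (hS : DifferentiableAt ℝ S φ)
    (hS' : HasDerivAt (deriv S) S'' φ) :
    deriv (groupVelocity r S) φ = 0 ↔
      S'' * (1 + 4 * r ^ 2 * S φ ^ 2) = 8 * r ^ 2 * S φ * deriv S φ ^ 2 := by
  have hden_ne : 1 + 4 * r ^ 2 * S φ ^ 2 ≠ 0 := by positivity
  rw [(hasDerivAt_groupVelocity hS hS').deriv, div_eq_zero_iff, or_iff_left (pow_ne_zero 2 hden_ne),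
    mul_eq_zero, or_iff_right (by norm_num), sub_eq_zero]

theorem deriv_groupVelocity_eq_zero_iff_of_hasDerivAt_deriv {k : ℝ} (hk : 0 < k)
    (hS : DifferentiableAt ℝ S φ) (hS' : HasDerivAt (deriv S) (-k * S φ) φ) :
    deriv (groupVelocity r S) φ = 0 ↔ S φ = 0 := by
  have hfactor_ne : k * (1 + 4 * r ^ 2 * S φ ^ 2) + 8 * r ^ 2 * deriv S φ ^ 2 ≠ 0 := by positivity
  calc deriv (groupVelocity r S) φ = 0
      ↔ -k * S φ * (1 + 4 * r ^ 2 * S φ ^ 2) = 8 * r ^ 2 * S φ * deriv S φ ^ 2 :=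
        deriv_groupVelocity_eq_zero_iff hS hS'
    _ ↔ S φ * (k * (1 + 4 * r ^ 2 * S φ ^ 2) + 8 * r ^ 2 * deriv S φ ^ 2) = 0 := by
        constructor <;> intro h <;> linear_combination -h
    _ ↔ S φ = 0 := mul_eq_zero_iff_right hfactor_ne

end

theorem deriv_const_mul_sin (γ : ℝ) : deriv (fun φ ↦ γ * sin φ) = fun φ ↦ γ * cos φ :=
  funext fun φ ↦ ((hasDerivAt_sin φ).const_mul γ).deriv

theorem groupVelocity_const_mul_sin (r γ φ : ℝ) :
    groupVelocity r (fun φ ↦ γ * sin φ) φ =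
      -2 * γ * cos φ / (1 + 4 * r ^ 2 * γ ^ 2 * sin φ ^ 2) := by
  simp only [groupVelocity, deriv_const_mul_sin, mul_pow, mul_assoc]

theorem deriv_groupVelocity_const_mul_sin_eq_zero_iff {r γ φ : ℝ} (hγ : γ ≠ 0) :
    deriv (groupVelocity r fun φ ↦ γ * sin φ) φ = 0 ↔ sin φ = 0 := by
  have hS : DifferentiableAt ℝ (fun φ ↦ γ * sin φ) φ := by fun_prop
  have hS' : HasDerivAt (deriv fun φ ↦ γ * sin φ) (-1 * (γ * sin φ)) φ := by
    rw [deriv_const_mul_sin]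
    simpa using (hasDerivAt_cos φ).const_mul γ
  rw [deriv_groupVelocity_eq_zero_iff_of_hasDerivAt_deriv one_pos hS hS',
    mul_eq_zero_iff_left hγ]

theorem stmt_15 (γ1 r : ℝ) (hγ1 : γ1 ≠ 0)
    (Vg : ℝ → ℝ)
    (hVg : ∀ φ, Vg φ = -2 * γ1 * Real.cos φ / (1 + 4 * r^2 * γ1^2 * (Real.sin φ)^2)) :
    (∀ φ : ℝ, deriv Vg φ = 0 ↔ Real.sin φ = 0) ∧ ∀ n : ℤ, deriv Vg ((n:ℝ) * π) = 0 := by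
  obtain rfl : Vg = groupVelocity r fun φ ↦ γ1 * sin φ :=
    funext fun φ ↦ (hVg φ).trans (groupVelocity_const_mul_sin r γ1 φ).symm
  have caustic_iff (φ : ℝ) := deriv_groupVelocity_const_mul_sin_eq_zero_iff (r := r) (φ := φ) hγ1
  exact ⟨caustic_iff, fun n ↦ (caustic_iff _).2 (sin_int_mul_pi n)⟩
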